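/- For every real z, it holds that 1 + z·R(z) - R(z)² < 0, where R(z) := Φ(z)/φ(z); equivalently, φ(z)² + z·Φ(z)·φ(z) - Φ(z)² < 0 for all real z. (Consequently, for each fixed x, the function v ↦ R(x + v)/(1 + v·R(x + v)) is decreasing on (0, ∞), attaining its supremum R(x) as v → 0.) -/

import Mathlib

open MeasureTheory

/-- The standard normal probability density function. -/
noncomputable def phi (x : ℝ) : ℝ := Real.exp (-x ^ 2 / 2) / Real.sqrt (2 * Real.pi)

/-- The standard normal cumulative distribution function. -/
noncomputable def Phi (x : ℝ) : ℝ := ∫ t in Set.Iic x, phi t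

open Filter Topology

lemma phi_pos (x : ℝ) : 0 < phi x := by
  unfold phi; positivity

lemma phi_cont : Continuous phi := by
  unfold phi; fun_prop

lemma phi_le (x : ℝ) : phi x ≤ Real.exp (1 / 2) * Real.exp x := by
  unfold phi
  have h1 : 1 ≤ Real.sqrt (2 * Real.pi) := by
    rw [Real.one_le_sqrt]; nlinarith [Real.pi_gt_three]
  rw [← Real.exp_add]
  refine (div_le_self (Real.exp_pos _).le h1).trans ?_
  apply Real.exp_le_exp.2
  nlinarith [sq_nonneg (x + 1)]

lemma phi_integrable : Integrable phi := by
  have h := (integrable_exp_neg_mul_sq (b := 1 / 2) (by norm_num)).div_const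
    (Real.sqrt (2 * Real.pi))
  refine h.congr (Eventually.of_forall fun x => ?_)
  simp only [phi]
  congr 2
  ring

lemma phi_deriv (x : ℝ) : HasDerivAt phi (-x * phi x) x := by
  have h : HasDerivAt (fun x : ℝ => -x ^ 2 / 2) (-x) x := by
    have := ((hasDerivAt_pow 2 x).neg).div_const 2
    refine this.congr_deriv ?_
    simp
    ring
  have h2 := h.exp.div_const (Real.sqrt (2 * Real.pi))
  refine h2.congr_deriv ?_
  simp only [phi]
  ring

lemma Phi_deriv (x : ℝ) : HasDerivAt Phi (phi x) x := by
  have h : HasDerivAt (fun u => Phi 0 + ∫ t in (0 : ℝ)..u, phi t) (phi x) x :=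
    (intervalIntegral.integral_hasDerivAt_right (phi_cont.intervalIntegrable _ _)
      (phi_cont.stronglyMeasurableAtFilter _ _) phi_cont.continuousAt).const_add _
  convert h using 1
  funext u
  rw [← intervalIntegral.integral_Iic_sub_Iic phi_integrable.integrableOn
    phi_integrable.integrableOn]
  simp [Phi]

lemma Phi_nonneg (x : ℝ) : 0 ≤ Phi x :=
  integral_nonneg fun t => (phi_pos t).le

lemma Phi_le (x : ℝ) : Phi x ≤ Real.exp (1 / 2) * Real.exp x := by
  rw [← integral_exp_Iic x, ← integral_const_mul]
  exact setIntegral_mono phi_integrable.integrableOn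
    ((integrableOn_exp_Iic x).const_mul _) phi_le

lemma pow_exp_tendsto (n : ℕ) :
    Tendsto (fun x : ℝ => x ^ n * Real.exp x) atBot (𝓝 0) := by
  have h := ((Real.tendsto_pow_mul_exp_neg_atTop_nhds_zero n).comp
    tendsto_neg_atBot_atTop).const_mul ((-1 : ℝ) ^ n)
  rw [mul_zero] at h
  refine h.congr fun x => ?_
  simp only [Function.comp, neg_neg]
  rw [← mul_assoc, ← mul_pow]
  simp

lemma pow_mul_tendsto (f : ℝ → ℝ) (h0 : ∀ x, 0 ≤ f x)
    (h1 : ∀ x, f x ≤ Real.exp (1 / 2) * Real.exp x) (n : ℕ) :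
    Tendsto (fun x : ℝ => x ^ n * f x) atBot (𝓝 0) := by
  have h := ((pow_exp_tendsto n).abs).const_mul (Real.exp (1 / 2))
  rw [abs_zero, mul_zero] at h
  refine squeeze_zero_norm (fun x => ?_) h
  rw [Real.norm_eq_abs, abs_mul, abs_mul, abs_of_nonneg (h0 x), Real.abs_exp]
  nlinarith [h1 x, abs_nonneg (x ^ n)]

lemma pos_of_deriv (f f' : ℝ → ℝ) (hf : ∀ x, HasDerivAt f (f' x) x) (hp : ∀ x, 0 < f' x)
    (hl : Tendsto f atBot (𝓝 0)) (x : ℝ) : 0 < f x := by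
  have hm : StrictMono f := strictMono_of_hasDerivAt_pos hf hp
  exact (hm.monotone.le_of_tendsto hl (x - 1)).trans_lt (hm (by linarith))

lemma Phi_lim (n : ℕ) : Tendsto (fun x : ℝ => x ^ n * Phi x) atBot (𝓝 0) :=
  pow_mul_tendsto _ Phi_nonneg Phi_le n

lemma phi_lim (n : ℕ) : Tendsto (fun x : ℝ => x ^ n * phi x) atBot (𝓝 0) :=
  pow_mul_tendsto _ (fun x => (phi_pos x).le) phi_le n

lemma Phi_pos (x : ℝ) : 0 < Phi x :=
  pos_of_deriv Phi phi Phi_deriv phi_pos (by simpa using Phi_lim 0) x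

lemma K_pos (x : ℝ) : 0 < phi x + x * Phi x := by
  refine pos_of_deriv (fun x => phi x + x * Phi x) Phi (fun x => ?_) Phi_pos ?_ x
  · refine HasDerivAt.congr_deriv ((phi_deriv x).add ((hasDerivAt_id x).mul (Phi_deriv x))) ?_
    simp
  · simpa using (phi_lim 0).add (Phi_lim 1)

lemma H_pos (x : ℝ) : 0 < Phi x * (1 + x ^ 2) + x * phi x := by
  refine pos_of_deriv (fun x => Phi x * (1 + x ^ 2) + x * phi x)
    (fun x => 2 * (phi x + x * Phi x)) (fun x => ?_)
    (fun x => mul_pos two_pos (K_pos x)) ?_ x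
  · refine HasDerivAt.congr_deriv (((Phi_deriv x).mul ((hasDerivAt_pow 2 x).const_add 1)).add
      ((hasDerivAt_id x).mul (phi_deriv x))) ?_
    simp
    ring
  · have h := ((Phi_lim 0).add (Phi_lim 2)).add (phi_lim 1)
    simp only [add_zero] at h
    refine h.congr fun x => ?_
    ring

lemma G_pos (x : ℝ) : 0 < Phi x ^ 2 - x * Phi x * phi x - phi x ^ 2 := by
  refine pos_of_deriv (fun x => Phi x ^ 2 - x * Phi x * phi x - phi x ^ 2)
    (fun x => phi x * (Phi x * (1 + x ^ 2) + x * phi x)) (fun x => ?_)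
    (fun x => mul_pos (phi_pos x) (H_pos x)) ?_ x
  · refine HasDerivAt.congr_deriv ((((Phi_deriv x).pow 2).sub
      (((hasDerivAt_id x).mul (Phi_deriv x)).mul (phi_deriv x))).sub
      ((phi_deriv x).pow 2)) ?_
    simp
    ring
  · have h := (((Phi_lim 0).mul (Phi_lim 0)).sub ((Phi_lim 1).mul (phi_lim 0))).sub
      ((phi_lim 0).mul (phi_lim 0))
    simp only [mul_zero, sub_zero] at h
    refine h.congr fun x => ?_
    ring

/-- With `R(z) = Φ(z)/φ(z)`, for every real `z` it holds `1 + z·R(z) - R(z)² < 0`;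
equivalently `φ(z)² + z·Φ(z)·φ(z) - Φ(z)² < 0`. -/
theorem mills_ratio_inequality (z : ℝ) :
    1 + z * (Phi z / phi z) - (Phi z / phi z) ^ 2 < 0 ∧
    phi z ^ 2 + z * Phi z * phi z - Phi z ^ 2 < 0 := by
  have h : phi z ^ 2 + z * Phi z * phi z - Phi z ^ 2 < 0 := by linarith [G_pos z]
  refine ⟨?_, h⟩
  have hp := phi_pos z
  have e : 1 + z * (Phi z / phi z) - (Phi z / phi z) ^ 2
      = (phi z ^ 2 + z * Phi z * phi z - Phi z ^ 2) / phi z ^ 2 := by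
    field_simp
  rw [e]
  exact div_neg_of_neg_of_pos h (by positivity)
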